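/- (Demonet–Iyama–Reading–Reiten–Thomas) The complete lattice tors A of torsion classes of mod A is completely semidistributive: for every torsion class 𝒳 and every nonempty family S of torsion classes such that 𝒳 ∧ 𝒴 has the same value 𝒵 for all 𝒴 ∈ S, one has 𝒳 ∧ ⋁S = 𝒵; and dually, if 𝒳 ∨ 𝒴 = 𝒵 for all 𝒴 ∈ S, then 𝒳 ∨ ⋀S = 𝒵. -/

import Mathlib

open CategoryTheory

/-- `𝒯` is a torsion class of finite-dimensional (= finitely generated) left `A`-modules:
a class of finitely generated modules, closed under isomorphism, containing `0`,
closed under quotients and closed under extensions. -/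
def IsTorsionClass (A : Type) [Ring A] (𝒯 : Set (ModuleCat.{0} A)) : Prop :=
  (∀ M ∈ 𝒯, Module.Finite A M) ∧
  (∀ M ∈ 𝒯, ∀ N : ModuleCat.{0} A, Nonempty (M ≃ₗ[A] N) → N ∈ 𝒯) ∧
  (∃ Z ∈ 𝒯, Subsingleton Z) ∧
  (∀ M ∈ 𝒯, ∀ N : ModuleCat.{0} A, ∀ f : M →ₗ[A] N, Function.Surjective f → N ∈ 𝒯) ∧
  (∀ X Y Z : ModuleCat.{0} A, X ∈ 𝒯 → Z ∈ 𝒯 →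
    ∀ (f : X →ₗ[A] Y) (g : Y →ₗ[A] Z), Function.Injective f → Function.Surjective g →
      LinearMap.range f = LinearMap.ker g → Y ∈ 𝒯)

/-- `ℱ` is a torsion-free class: closed under isomorphism, containing `0`,
closed under submodules and closed under extensions. -/
def IsTorsionFreeClass (A : Type) [Ring A] (ℱ : Set (ModuleCat.{0} A)) : Prop :=
  (∀ M ∈ ℱ, Module.Finite A M) ∧
  (∀ M ∈ ℱ, ∀ N : ModuleCat.{0} A, Nonempty (M ≃ₗ[A] N) → N ∈ ℱ) ∧
  (∃ Z ∈ ℱ, Subsingleton Z) ∧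
  (∀ M ∈ ℱ, ∀ N : ModuleCat.{0} A, ∀ f : N →ₗ[A] M, Function.Injective f → N ∈ ℱ) ∧
  (∀ X Y Z : ModuleCat.{0} A, X ∈ ℱ → Z ∈ ℱ →
    ∀ (f : X →ₗ[A] Y) (g : Y →ₗ[A] Z), Function.Injective f → Function.Surjective g →
      LinearMap.range f = LinearMap.ker g → Y ∈ ℱ)

/-- `𝒞⊥ = {Y | Hom(X,Y) = 0 for all X ∈ 𝒞}` (within finite-dimensional modules). -/
def rightPerp (A : Type) [Ring A] (𝒞 : Set (ModuleCat.{0} A)) : Set (ModuleCat.{0} A) :=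
  {Y | Module.Finite A Y ∧ ∀ X ∈ 𝒞, ∀ f : X →ₗ[A] Y, f = 0}

/-- `⊥𝒞 = {X | Hom(X,Y) = 0 for all Y ∈ 𝒞}` (within finite-dimensional modules). -/
def leftPerp (A : Type) [Ring A] (𝒞 : Set (ModuleCat.{0} A)) : Set (ModuleCat.{0} A) :=
  {X | Module.Finite A X ∧ ∀ Y ∈ 𝒞, ∀ f : X →ₗ[A] Y, f = 0}

/-- A brick: a nonzero finite-dimensional module all of whose nonzero endomorphisms
are invertible. -/
def IsBrick (A : Type) [Ring A] (B : ModuleCat.{0} A) : Prop :=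
  Module.Finite A B ∧ Nontrivial B ∧ ∀ f : B →ₗ[A] B, f ≠ 0 → Function.Bijective f

/-- `T(𝒞)`, the smallest torsion class containing `𝒞`. -/
def TgenSet (A : Type) [Ring A] (𝒞 : Set (ModuleCat.{0} A)) : Set (ModuleCat.{0} A) :=
  {X | ∀ 𝒯, IsTorsionClass A 𝒯 → 𝒞 ⊆ 𝒯 → X ∈ 𝒯}

/-- `T(B)`, the smallest torsion class containing the module `B`. -/
def Tgen (A : Type) [Ring A] (B : ModuleCat.{0} A) : Set (ModuleCat.{0} A) :=
  TgenSet A {B}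

/-- `F(B)`, the smallest torsion-free class containing the module `B`. -/
def Fgen (A : Type) [Ring A] (B : ModuleCat.{0} A) : Set (ModuleCat.{0} A) :=
  {X | ∀ ℱ, IsTorsionFreeClass A ℱ → B ∈ ℱ → X ∈ ℱ}

/-- The join of a family of torsion classes in `tors A`: the intersection of all torsion
classes containing every member of the family. -/
def torsJoin (A : Type) [Ring A] (S : Set (Set (ModuleCat.{0} A))) : Set (ModuleCat.{0} A) :=
  {M | ∀ 𝒲, IsTorsionClass A 𝒲 → (∀ 𝒯 ∈ S, 𝒯 ⊆ 𝒲) → M ∈ 𝒲}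

/-!
The meet half is a Noetherian induction on quotients: a nonzero module in `⋁ S` receives a nonzero
map from a module in some `𝒴 ∈ S`, so it has a nonzero submodule in `𝒴`. If the module also lies in
`𝒳`, then the quotient by this submodule lies in `𝒳 ∧ ⋁ S`, hence by induction in `𝒵 ⊆ 𝒴`, and an
extension of two modules in `𝒴` is in `𝒴`.

The join half is the same argument for torsion-free classes. Passing to right perpendiculars embeds
`tors A` order-reversingly and turns joins into intersections, so the claim becomes
`𝒳⊥ ∩ (⋂ S)⊥ = 𝒵⊥`. A nonzero module in `(⋂ S)⊥` lies outside some `𝒴 ∈ S`, so its `𝒴`-torsion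
submodule is proper, and Artinian induction on submodules replaces the one on quotients.
-/

universe v

section Module

variable {R M N P Q : Type*} [Ring R] [AddCommGroup M] [AddCommGroup N] [AddCommGroup P]
  [AddCommGroup Q] [Module R M] [Module R N] [Module R P] [Module R Q]

theorem exists_comp_eq_of_comp_eq_zero_of_surjective {f : M →ₗ[R] N} {g : N →ₗ[R] P}
    (hg : Function.Surjective g) (hfg : LinearMap.range f = LinearMap.ker g) {p : N →ₗ[R] Q}
    (hp : p ∘ₗ f = 0) : ∃ q : P →ₗ[R] Q, q ∘ₗ g = p := by
  have hker : LinearMap.ker g ≤ LinearMap.ker p := hfg ▸ LinearMap.range_le_ker_iff.mpr hp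
  refine ⟨(LinearMap.ker g).liftQ p hker ∘ₗ (g.quotKerEquivOfSurjective hg).symm, ?_⟩
  ext y
  have hy : (g.quotKerEquivOfSurjective hg).symm (g y) = Submodule.Quotient.mk y :=
    (LinearEquiv.symm_apply_eq _).mpr rfl
  simp [hy]

theorem exists_comp_eq_of_comp_eq_zero_of_injective {f : M →ₗ[R] N} {g : N →ₗ[R] P}
    (hf : Function.Injective f) (hfg : LinearMap.range f = LinearMap.ker g) {p : Q →ₗ[R] N}
    (hp : g ∘ₗ p = 0) : ∃ q : Q →ₗ[R] M, f ∘ₗ q = p := by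
  have hrange : ∀ x, p x ∈ LinearMap.range f := hfg ▸ LinearMap.congr_fun hp
  refine ⟨(LinearEquiv.ofInjective f hf).symm ∘ₗ p.codRestrict (LinearMap.range f) hrange, ?_⟩
  ext x
  exact LinearEquiv.ofInjective_symm_apply f (h := hf) ⟨p x, hrange x⟩

end Module

section Induction

variable {R : Type*} [Ring R]

theorem induction_of_forall_quotient {motive : ModuleCat.{v} R → Prop}
    (step : ∀ M : ModuleCat.{v} R,
      (∀ K : Submodule R M, K ≠ ⊥ → motive (ModuleCat.of R (M ⧸ K))) → motive M)
    (M : ModuleCat.{v} R) [IsNoetherian R M] : motive M := by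
  suffices h : ∀ (N : Submodule R M) (Q : ModuleCat.{v} R) (f : M →ₗ[R] Q),
      Function.Surjective f → LinearMap.ker f = N → motive Q from
    h _ M LinearMap.id Function.surjective_id rfl
  intro N
  induction N using WellFoundedGT.induction with
  | ind N ih =>
    rintro Q f hf rfl
    refine step Q fun K hK ↦ ih _ ?_ _ (K.mkQ ∘ₗ f) (K.mkQ_surjective.comp hf) rfl
    rw [LinearMap.ker_comp, Submodule.ker_mkQ, ← Submodule.comap_bot]
    exact Submodule.comap_strictMono_of_surjective hf hK.bot_lt

theorem induction_of_forall_submodule {motive : ModuleCat.{v} R → Prop}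
    (step : ∀ M : ModuleCat.{v} R,
      (∀ K : Submodule R M, K ≠ ⊤ → motive (ModuleCat.of R K)) → motive M)
    (M : ModuleCat.{v} R) [IsArtinian R M] : motive M := by
  suffices h : ∀ (N : Submodule R M) (Q : ModuleCat.{v} R) (f : Q →ₗ[R] M),
      Function.Injective f → LinearMap.range f = N → motive Q from
    h _ M LinearMap.id Function.injective_id rfl
  intro N
  induction N using WellFoundedLT.induction with
  | ind N ih =>
    rintro Q f hf rfl
    refine step Q fun K hK ↦ ih _ ?_ _ (f ∘ₗ K.subtype) (hf.comp K.injective_subtype) rfl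
    rw [LinearMap.range_comp, Submodule.range_subtype, ← Submodule.map_top]
    exact Submodule.map_strictMono_of_injective hf hK.lt_top

end Induction

section TorsionClasses

variable {A : Type} [Ring A]

section Perpendicular

theorem rightPerp_antitone : Antitone (rightPerp A) :=
  fun _ _ h _ hF ↦ ⟨hF.1, fun X hX ↦ hF.2 X (h hX)⟩

theorem rightPerp_union (𝒞 𝒟 : Set (ModuleCat.{0} A)) :
    rightPerp A (𝒞 ∪ 𝒟) = rightPerp A 𝒞 ∩ rightPerp A 𝒟 := by
  refine Set.Subset.antisymm (Set.subset_inter (rightPerp_antitone Set.subset_union_left)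
    (rightPerp_antitone Set.subset_union_right)) fun F ⟨hC, hD⟩ ↦ ⟨hC.1, ?_⟩
  rintro X (hX | hX)
  exacts [hC.2 X hX, hD.2 X hX]

theorem subset_leftPerp_rightPerp {𝒞 : Set (ModuleCat.{0} A)}
    (h𝒞 : ∀ M ∈ 𝒞, Module.Finite A M) : 𝒞 ⊆ leftPerp A (rightPerp A 𝒞) :=
  fun M hM ↦ ⟨h𝒞 M hM, fun _ hF ↦ hF.2 M hM⟩

theorem subsingleton_of_mem_of_mem_rightPerp {𝒞 : Set (ModuleCat.{0} A)} {M : ModuleCat.{0} A}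
    (hM : M ∈ 𝒞) (hM' : M ∈ rightPerp A 𝒞) : Subsingleton M :=
  subsingleton_of_forall_eq 0 (LinearMap.congr_fun (hM'.2 M hM LinearMap.id))

theorem isTorsionClass_leftPerp (𝒞 : Set (ModuleCat.{0} A)) :
    IsTorsionClass A (leftPerp A 𝒞) := by
  have mem_of_surjective {M N : ModuleCat.{0} A} (hM : M ∈ leftPerp A 𝒞) (f : M →ₗ[A] N)
      (hf : Function.Surjective f) : N ∈ leftPerp A 𝒞 :=
    have := hM.1
    ⟨.of_surjective f hf, fun Y hY p ↦
      (LinearMap.cancel_right hf).mp ((hM.2 Y hY (p ∘ₗ f)).trans (LinearMap.zero_comp f).symm)⟩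
  refine ⟨fun M hM ↦ hM.1, fun M hM N ⟨e⟩ ↦ mem_of_surjective hM e.toLinearMap e.surjective,
    ⟨ModuleCat.of A PUnit, ⟨inferInstanceAs (Module.Finite A PUnit), fun Y _ f ↦ ?_⟩,
      inferInstanceAs (Subsingleton PUnit)⟩,
    fun M hM N ↦ mem_of_surjective hM, ?_⟩
  · exact LinearMap.ext fun _ ↦ map_zero f
  · rintro X Y Z ⟨_, hX⟩ ⟨_, hZ⟩ f g - hg hfg
    refine ⟨.of_exact (LinearMap.exact_iff.mpr hfg.symm) hg, fun W hW p ↦ ?_⟩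
    obtain ⟨q, rfl⟩ := exists_comp_eq_of_comp_eq_zero_of_surjective hg hfg (hX W hW (p ∘ₗ f))
    rw [hZ W hW q, LinearMap.zero_comp]

theorem isTorsionFreeClass_rightPerp [IsNoetherianRing A] (𝒞 : Set (ModuleCat.{0} A)) :
    IsTorsionFreeClass A (rightPerp A 𝒞) := by
  have mem_of_injective {M N : ModuleCat.{0} A} (hM : M ∈ rightPerp A 𝒞) (f : N →ₗ[A] M)
      (hf : Function.Injective f) : N ∈ rightPerp A 𝒞 :=
    have := hM.1
    ⟨.of_injective f hf, fun X hX p ↦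
      (LinearMap.cancel_left hf).mp ((hM.2 X hX (f ∘ₗ p)).trans (LinearMap.comp_zero f).symm)⟩
  refine ⟨fun M hM ↦ hM.1, fun M hM N ⟨e⟩ ↦ mem_of_injective hM e.symm.toLinearMap e.symm.injective,
    ⟨ModuleCat.of A PUnit, ⟨inferInstanceAs (Module.Finite A PUnit), fun _ _ _ ↦ rfl⟩,
      inferInstanceAs (Subsingleton PUnit)⟩,
    fun M hM N ↦ mem_of_injective hM, ?_⟩
  rintro X Y Z ⟨_, hX⟩ ⟨_, hZ⟩ f g hf hg hfg
  refine ⟨.of_exact (LinearMap.exact_iff.mpr hfg.symm) hg, fun W hW p ↦ ?_⟩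
  obtain ⟨q, rfl⟩ := exists_comp_eq_of_comp_eq_zero_of_injective hf hfg (hZ W hW (g ∘ₗ p))
  rw [hX W hW q, LinearMap.comp_zero]

end Perpendicular

namespace IsTorsionClass

variable {𝒯 : Set (ModuleCat.{0} A)}

theorem mem_of_subsingleton (h𝒯 : IsTorsionClass A 𝒯) (M : ModuleCat.{0} A) [Subsingleton M] :
    M ∈ 𝒯 := by
  obtain ⟨_, ⟨Z, hZ, -⟩, hquot, -⟩ := h𝒯.2
  exact hquot Z hZ M 0 (Function.surjective_to_subsingleton _)

theorem quotient_mem (h𝒯 : IsTorsionClass A 𝒯) {M : ModuleCat.{0} A} (hM : M ∈ 𝒯)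
    (N : Submodule A M) : ModuleCat.of A (M ⧸ N) ∈ 𝒯 :=
  h𝒯.2.2.2.1 M hM _ N.mkQ N.mkQ_surjective

theorem range_mem (h𝒯 : IsTorsionClass A 𝒯) {L : ModuleCat.{0} A} (hL : L ∈ 𝒯)
    {M : Type} [AddCommGroup M] [Module A M] (f : L →ₗ[A] M) :
    ModuleCat.of A (LinearMap.range f) ∈ 𝒯 :=
  h𝒯.2.2.2.1 L hL _ f.rangeRestrict f.surjective_rangeRestrict

theorem mem_of_submodule_quotient (h𝒯 : IsTorsionClass A 𝒯) {M : ModuleCat.{0} A}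
    (N : Submodule A M) (hN : ModuleCat.of A N ∈ 𝒯) (hMN : ModuleCat.of A (M ⧸ N) ∈ 𝒯) : M ∈ 𝒯 :=
  h𝒯.2.2.2.2 _ M _ hN hMN N.subtype N.mkQ N.injective_subtype N.mkQ_surjective (by simp)

theorem mem_of_top_mem (h𝒯 : IsTorsionClass A 𝒯) {M : ModuleCat.{0} A}
    (h : ModuleCat.of A (⊤ : Submodule A M) ∈ 𝒯) : M ∈ 𝒯 :=
  h𝒯.2.1 _ h M ⟨Submodule.topEquiv⟩

theorem comap_mkQ_mem (h𝒯 : IsTorsionClass A 𝒯) {M : ModuleCat.{0} A} {N : Submodule A M}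
    (hN : ModuleCat.of A N ∈ 𝒯) {P : Submodule A (M ⧸ N)} (hP : ModuleCat.of A P ∈ 𝒯) :
    ModuleCat.of A (P.comap N.mkQ) ∈ 𝒯 := by
  refine h𝒯.2.2.2.2 _ (ModuleCat.of A (P.comap N.mkQ)) _ hN hP
    (Submodule.inclusion (Submodule.le_comap_mkQ N P)) (N.mkQ.restrict fun _ hx ↦ hx)
    (Submodule.inclusion_injective _) ?_ ?_
  · rintro ⟨y, hy⟩
    obtain ⟨x, rfl⟩ := N.mkQ_surjective y
    exact ⟨⟨x, hy⟩, rfl⟩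
  · rw [Submodule.range_inclusion, LinearMap.ker_restrict, Submodule.ker_mkQ]

theorem exists_torsion_submodule (h𝒯 : IsTorsionClass A 𝒯) (M : ModuleCat.{0} A)
    [IsNoetherian A M] :
    ∃ N : Submodule A M, ModuleCat.of A N ∈ 𝒯 ∧ ModuleCat.of A (M ⧸ N) ∈ rightPerp A 𝒯 := by
  have hbot : ModuleCat.of A (⊥ : Submodule A M) ∈ 𝒯 :=
    have : Subsingleton (ModuleCat.of A (⊥ : Submodule A M)) :=
      inferInstanceAs (Subsingleton (⊥ : Submodule A M))
    h𝒯.mem_of_subsingleton _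
  obtain ⟨N, hN, hmax⟩ := set_has_maximal_iff_noetherian.mpr ‹IsNoetherian A M›
    {N | ModuleCat.of A N ∈ 𝒯} ⟨⊥, hbot⟩
  refine ⟨N, hN, inferInstanceAs (Module.Finite A (M ⧸ N)), fun X hX f ↦ ?_⟩
  have hcomap : N = (LinearMap.range f).comap N.mkQ :=
    eq_of_le_of_not_lt (Submodule.le_comap_mkQ N _)
      (hmax _ (h𝒯.comap_mkQ_mem hN (h𝒯.range_mem hX f)))
  apply LinearMap.range_eq_bot.mp
  rw [← Submodule.map_comap_eq_of_surjective N.mkQ_surjective (LinearMap.range f), ← hcomap,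
    Submodule.mkQ_map_self]

theorem leftPerp_rightPerp [IsNoetherianRing A] (h𝒯 : IsTorsionClass A 𝒯) :
    leftPerp A (rightPerp A 𝒯) = 𝒯 := by
  refine Set.Subset.antisymm (fun M ⟨_, hM⟩ ↦ ?_) (subset_leftPerp_rightPerp h𝒯.1)
  obtain ⟨N, hN, hMN⟩ := h𝒯.exists_torsion_submodule M
  obtain rfl : N = ⊤ := by rw [← N.ker_mkQ, hM _ hMN N.mkQ, LinearMap.ker_zero]
  exact h𝒯.mem_of_top_mem hN

end IsTorsionClass

namespace IsTorsionFreeClass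

variable {ℱ : Set (ModuleCat.{0} A)}

theorem mem_of_subsingleton (hℱ : IsTorsionFreeClass A ℱ) (M : ModuleCat.{0} A)
    [Subsingleton M] : M ∈ ℱ := by
  obtain ⟨_, ⟨Z, hZ, -⟩, hsub, -⟩ := hℱ.2
  exact hsub Z hZ M 0 (Function.injective_of_subsingleton _)

theorem submodule_mem (hℱ : IsTorsionFreeClass A ℱ) {M : ModuleCat.{0} A} (hM : M ∈ ℱ)
    (N : Submodule A M) : ModuleCat.of A N ∈ ℱ :=
  hℱ.2.2.2.1 M hM _ N.subtype N.injective_subtype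

theorem mem_of_submodule_quotient (hℱ : IsTorsionFreeClass A ℱ) {M : ModuleCat.{0} A}
    (N : Submodule A M) (hN : ModuleCat.of A N ∈ ℱ) (hMN : ModuleCat.of A (M ⧸ N) ∈ ℱ) : M ∈ ℱ :=
  hℱ.2.2.2.2 _ M _ hN hMN N.subtype N.mkQ N.injective_subtype N.mkQ_surjective (by simp)

end IsTorsionFreeClass

section Lattice

variable {S : Set (Set (ModuleCat.{0} A))}

theorem isTorsionClass_sInter (hne : S.Nonempty) (hS : ∀ 𝒯 ∈ S, IsTorsionClass A 𝒯) :
    IsTorsionClass A (⋂₀ S) := by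
  obtain ⟨𝒯₀, h𝒯₀⟩ := hne
  refine ⟨fun M hM ↦ (hS 𝒯₀ h𝒯₀).1 M (hM 𝒯₀ h𝒯₀), fun M hM N e 𝒯 h𝒯 ↦ ?_,
    ⟨ModuleCat.of A PUnit, fun 𝒯 h𝒯 ↦ ?_, inferInstanceAs (Subsingleton PUnit)⟩,
    fun M hM N f hf 𝒯 h𝒯 ↦ ?_, fun X Y Z hX hZ f g hf hg hfg 𝒯 h𝒯 ↦ ?_⟩
  · exact (hS 𝒯 h𝒯).2.1 M (hM 𝒯 h𝒯) N e
  · have : Subsingleton (ModuleCat.of A PUnit) := inferInstanceAs (Subsingleton PUnit)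
    exact (hS 𝒯 h𝒯).mem_of_subsingleton _
  · exact (hS 𝒯 h𝒯).2.2.2.1 M (hM 𝒯 h𝒯) N f hf
  · exact (hS 𝒯 h𝒯).2.2.2.2 X Y Z (hX 𝒯 h𝒯) (hZ 𝒯 h𝒯) f g hf hg hfg

theorem subset_torsJoin {𝒯 : Set (ModuleCat.{0} A)} (h𝒯 : 𝒯 ∈ S) : 𝒯 ⊆ torsJoin A S :=
  fun _ hM _ _ h ↦ h 𝒯 h𝒯 hM

theorem torsJoin_subset {𝒲 : Set (ModuleCat.{0} A)} (h𝒲 : IsTorsionClass A 𝒲)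
    (h : ∀ 𝒯 ∈ S, 𝒯 ⊆ 𝒲) : torsJoin A S ⊆ 𝒲 :=
  fun _ hM ↦ hM 𝒲 h𝒲 h

theorem subset_leftPerp_rightPerp_sUnion (hS : ∀ 𝒯 ∈ S, IsTorsionClass A 𝒯) :
    ∀ 𝒯 ∈ S, 𝒯 ⊆ leftPerp A (rightPerp A (⋃₀ S)) :=
  Set.sUnion_subset_iff.mp <| subset_leftPerp_rightPerp fun M ⟨𝒯, h𝒯, hM⟩ ↦ (hS 𝒯 h𝒯).1 M hM

theorem isTorsionClass_torsJoin (hS : ∀ 𝒯 ∈ S, IsTorsionClass A 𝒯) :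
    IsTorsionClass A (torsJoin A S) := by
  have hjoin : torsJoin A S = ⋂₀ {𝒲 | IsTorsionClass A 𝒲 ∧ ∀ 𝒯 ∈ S, 𝒯 ⊆ 𝒲} := by
    ext M
    simp only [torsJoin, Set.mem_ofPred_eq, Set.mem_sInter, and_imp]
  rw [hjoin]
  exact isTorsionClass_sInter
    ⟨_, isTorsionClass_leftPerp _, subset_leftPerp_rightPerp_sUnion hS⟩ fun _ h𝒲 ↦ h𝒲.1

theorem rightPerp_torsJoin (hS : ∀ 𝒯 ∈ S, IsTorsionClass A 𝒯) :
    rightPerp A (torsJoin A S) = rightPerp A (⋃₀ S) := by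
  have hjoin : torsJoin A S ⊆ leftPerp A (rightPerp A (⋃₀ S)) :=
    torsJoin_subset (isTorsionClass_leftPerp _) (subset_leftPerp_rightPerp_sUnion hS)
  exact Set.Subset.antisymm (rightPerp_antitone (Set.sUnion_subset fun _ ↦ subset_torsJoin))
    fun F hF ↦ ⟨hF.1, fun X hX ↦ (hjoin hX).2 F hF⟩

theorem rightPerp_torsJoin_pair {𝒳 𝒴 : Set (ModuleCat.{0} A)} (h𝒳 : IsTorsionClass A 𝒳)
    (h𝒴 : IsTorsionClass A 𝒴) :
    rightPerp A (torsJoin A {𝒳, 𝒴}) = rightPerp A 𝒳 ∩ rightPerp A 𝒴 := by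
  rw [rightPerp_torsJoin (by simp [h𝒳, h𝒴]), Set.sUnion_pair, rightPerp_union]

theorem torsJoin_pair_eq_iff [IsNoetherianRing A] {𝒳 𝒴 𝒵 : Set (ModuleCat.{0} A)}
    (h𝒳 : IsTorsionClass A 𝒳) (h𝒴 : IsTorsionClass A 𝒴) (h𝒵 : IsTorsionClass A 𝒵) :
    torsJoin A {𝒳, 𝒴} = 𝒵 ↔ rightPerp A 𝒳 ∩ rightPerp A 𝒴 = rightPerp A 𝒵 := by
  have hjoin : IsTorsionClass A (torsJoin A {𝒳, 𝒴}) :=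
    isTorsionClass_torsJoin (by simp [h𝒳, h𝒴])
  rw [← rightPerp_torsJoin_pair h𝒳 h𝒴]
  refine ⟨congrArg _, fun h ↦ ?_⟩
  rw [← hjoin.leftPerp_rightPerp, h, h𝒵.leftPerp_rightPerp]

end Lattice

section Semidistributivity

variable {S : Set (Set (ModuleCat.{0} A))}

theorem exists_submodule_ne_bot_mem_of_mem_torsJoin (hS : ∀ 𝒴 ∈ S, IsTorsionClass A 𝒴)
    {M : ModuleCat.{0} A} [Nontrivial M] (hM : M ∈ torsJoin A S) :
    ∃ 𝒴 ∈ S, ∃ N : Submodule A M, N ≠ ⊥ ∧ ModuleCat.of A N ∈ 𝒴 := by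
  by_contra! h
  refine not_subsingleton M (subsingleton_of_mem_of_mem_rightPerp hM ?_)
  rw [rightPerp_torsJoin hS]
  refine ⟨(isTorsionClass_torsJoin hS).1 M hM, fun L ⟨𝒴, h𝒴, hL⟩ f ↦ ?_⟩
  by_contra hf
  exact h 𝒴 h𝒴 (LinearMap.range f) (mt LinearMap.range_eq_bot.mp hf) ((hS 𝒴 h𝒴).range_mem hL f)

theorem exists_submodule_ne_top_quotient_mem_of_mem_rightPerp_sInter
    (hS : ∀ 𝒴 ∈ S, IsTorsionClass A 𝒴) {F : ModuleCat.{0} A} [IsNoetherian A F] [Nontrivial F]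
    (hF : F ∈ rightPerp A (⋂₀ S)) :
    ∃ 𝒴 ∈ S, ∃ N : Submodule A F, N ≠ ⊤ ∧ ModuleCat.of A (F ⧸ N) ∈ rightPerp A 𝒴 := by
  have hFS : F ∉ ⋂₀ S := fun h ↦ not_subsingleton F (subsingleton_of_mem_of_mem_rightPerp h hF)
  obtain ⟨𝒴, h𝒴, hF𝒴⟩ : ∃ 𝒴 ∈ S, F ∉ 𝒴 := by simpa using hFS
  obtain ⟨N, hN, hFN⟩ := (hS 𝒴 h𝒴).exists_torsion_submodule F
  refine ⟨𝒴, h𝒴, N, ?_, hFN⟩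
  rintro rfl
  exact hF𝒴 ((hS 𝒴 h𝒴).mem_of_top_mem hN)

theorem inter_torsJoin_eq [IsNoetherianRing A] {𝒳 𝒵 : Set (ModuleCat.{0} A)}
    (h𝒳 : IsTorsionClass A 𝒳) (hne : S.Nonempty) (hS : ∀ 𝒴 ∈ S, IsTorsionClass A 𝒴)
    (h : ∀ 𝒴 ∈ S, 𝒳 ∩ 𝒴 = 𝒵) : 𝒳 ∩ torsJoin A S = 𝒵 := by
  obtain ⟨𝒴₀, h𝒴₀⟩ := hne
  have step (M : ModuleCat.{0} A) (ih : ∀ N : Submodule A M, N ≠ ⊥ →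
      ModuleCat.of A (M ⧸ N) ∈ 𝒳 ∩ torsJoin A S → ModuleCat.of A (M ⧸ N) ∈ 𝒵) :
      M ∈ 𝒳 ∩ torsJoin A S → M ∈ 𝒵 := by
    rintro ⟨hM𝒳, hMS⟩
    rcases subsingleton_or_nontrivial M with _ | _
    · exact h 𝒴₀ h𝒴₀ ▸ ⟨hM𝒳, (hS 𝒴₀ h𝒴₀).mem_of_subsingleton M⟩
    obtain ⟨𝒴, h𝒴, N, hN, hN𝒴⟩ := exists_submodule_ne_bot_mem_of_mem_torsJoin hS hMS
    have hMN : ModuleCat.of A (M ⧸ N) ∈ 𝒵 :=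
      ih N hN ⟨h𝒳.quotient_mem hM𝒳 N, (isTorsionClass_torsJoin hS).quotient_mem hMS N⟩
    rw [← h 𝒴 h𝒴] at hMN ⊢
    exact ⟨hM𝒳, (hS 𝒴 h𝒴).mem_of_submodule_quotient N hN𝒴 hMN.2⟩
  apply Set.Subset.antisymm
  · intro M hM
    have := h𝒳.1 M hM.1
    exact induction_of_forall_quotient (motive := fun M ↦ M ∈ 𝒳 ∩ torsJoin A S → M ∈ 𝒵) step M hM
  · rw [← h 𝒴₀ h𝒴₀]
    exact Set.inter_subset_inter_right 𝒳 (subset_torsJoin h𝒴₀)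

theorem inter_rightPerp_sInter_eq [IsArtinianRing A] {ℱ 𝒢 : Set (ModuleCat.{0} A)}
    (hℱ : IsTorsionFreeClass A ℱ) (hne : S.Nonempty) (hS : ∀ 𝒴 ∈ S, IsTorsionClass A 𝒴)
    (h : ∀ 𝒴 ∈ S, ℱ ∩ rightPerp A 𝒴 = 𝒢) : ℱ ∩ rightPerp A (⋂₀ S) = 𝒢 := by
  obtain ⟨𝒴₀, h𝒴₀⟩ := hne
  have step (F : ModuleCat.{0} A) (ih : ∀ N : Submodule A F, N ≠ ⊤ →
      ModuleCat.of A N ∈ ℱ ∩ rightPerp A (⋂₀ S) → ModuleCat.of A N ∈ 𝒢) :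
      F ∈ ℱ ∩ rightPerp A (⋂₀ S) → F ∈ 𝒢 := by
    rintro ⟨hFℱ, hFS⟩
    have := hℱ.1 F hFℱ
    rcases subsingleton_or_nontrivial F with _ | _
    · exact h 𝒴₀ h𝒴₀ ▸ ⟨hFℱ, (isTorsionFreeClass_rightPerp 𝒴₀).mem_of_subsingleton F⟩
    obtain ⟨𝒴, h𝒴, N, hN, hFN⟩ :=
      exists_submodule_ne_top_quotient_mem_of_mem_rightPerp_sInter hS hFS
    have hN𝒢 : ModuleCat.of A N ∈ 𝒢 :=
      ih N hN ⟨hℱ.submodule_mem hFℱ N, (isTorsionFreeClass_rightPerp _).submodule_mem hFS N⟩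
    rw [← h 𝒴 h𝒴] at hN𝒢 ⊢
    exact ⟨hFℱ, (isTorsionFreeClass_rightPerp 𝒴).mem_of_submodule_quotient N hN𝒢.2 hFN⟩
  apply Set.Subset.antisymm
  · intro F hF
    have := hℱ.1 F hF.1
    exact induction_of_forall_submodule (motive := fun F ↦ F ∈ ℱ ∩ rightPerp A (⋂₀ S) → F ∈ 𝒢)
      step F hF
  · rw [← h 𝒴₀ h𝒴₀]
    exact Set.inter_subset_inter_right ℱ (rightPerp_antitone (Set.sInter_subset_of_mem h𝒴₀))

theorem torsJoin_pair_sInter_eq [IsArtinianRing A] {𝒳 𝒵 : Set (ModuleCat.{0} A)}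
    (h𝒳 : IsTorsionClass A 𝒳) (hne : S.Nonempty) (hS : ∀ 𝒴 ∈ S, IsTorsionClass A 𝒴)
    (h : ∀ 𝒴 ∈ S, torsJoin A {𝒳, 𝒴} = 𝒵) : torsJoin A {𝒳, ⋂₀ S} = 𝒵 := by
  have h𝒵 : IsTorsionClass A 𝒵 := by
    obtain ⟨𝒴, h𝒴⟩ := hne
    exact h 𝒴 h𝒴 ▸ isTorsionClass_torsJoin (by simp [h𝒳, hS 𝒴 h𝒴])
  rw [torsJoin_pair_eq_iff h𝒳 (isTorsionClass_sInter hne hS) h𝒵]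
  exact inter_rightPerp_sInter_eq (isTorsionFreeClass_rightPerp 𝒳) hne hS fun 𝒴 h𝒴 ↦
    (torsJoin_pair_eq_iff h𝒳 (hS 𝒴 h𝒴) h𝒵).mp (h 𝒴 h𝒴)

end Semidistributivity

end TorsionClasses

theorem tors_completelySemidistributive_general (A : Type) [Ring A] [IsArtinianRing A] :
    (∀ (𝒳 𝒵 : Set (ModuleCat.{0} A)) (S : Set (Set (ModuleCat.{0} A))),
      IsTorsionClass A 𝒳 → S.Nonempty → (∀ 𝒴 ∈ S, IsTorsionClass A 𝒴) →
      (∀ 𝒴 ∈ S, 𝒳 ∩ 𝒴 = 𝒵) → 𝒳 ∩ torsJoin A S = 𝒵) ∧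
    (∀ (𝒳 𝒵 : Set (ModuleCat.{0} A)) (S : Set (Set (ModuleCat.{0} A))),
      IsTorsionClass A 𝒳 → S.Nonempty → (∀ 𝒴 ∈ S, IsTorsionClass A 𝒴) →
      (∀ 𝒴 ∈ S, torsJoin A {𝒳, 𝒴} = 𝒵) → torsJoin A {𝒳, ⋂₀ S} = 𝒵) :=
  ⟨fun _ _ _ ↦ inter_torsJoin_eq, fun _ _ _ ↦ torsJoin_pair_sInter_eq⟩

theorem tors_completelySemidistributive
    (k A : Type) [Field k] [Ring A] [Algebra k A] [FiniteDimensional k A] :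
    (∀ (𝒳 𝒵 : Set (ModuleCat.{0} A)) (S : Set (Set (ModuleCat.{0} A))),
      IsTorsionClass A 𝒳 → S.Nonempty → (∀ 𝒴 ∈ S, IsTorsionClass A 𝒴) →
      (∀ 𝒴 ∈ S, 𝒳 ∩ 𝒴 = 𝒵) → 𝒳 ∩ torsJoin A S = 𝒵) ∧
    (∀ (𝒳 𝒵 : Set (ModuleCat.{0} A)) (S : Set (Set (ModuleCat.{0} A))),
      IsTorsionClass A 𝒳 → S.Nonempty → (∀ 𝒴 ∈ S, IsTorsionClass A 𝒴) →
      (∀ 𝒴 ∈ S, torsJoin A {𝒳, 𝒴} = 𝒵) → torsJoin A {𝒳, ⋂₀ S} = 𝒵) := by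
  have : IsArtinianRing A := .of_finite k A
  exact tors_completelySemidistributive_general A
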